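/- Fix an integer n ≥ 2, and let t, s ∈ ℂ be algebraically independent over ℚ. Then the matrices a(t) and b(s) generate a free subgroup of rank 2 of GL(n,ℂ); that is, the group homomorphism from the free group on two generators to GL(n,ℂ) sending the first generator to a(t) and the second to b(s) is injective. -/

import Mathlib

/-!
The proof plays ping-pong on `ℂⁿ`. Let `K = ℚ[t]`; since `s` is transcendental over `K`, a vector
with entries in `K[s]` is the value at `X = s` of a unique vector of polynomials in `K[X]`, so it
makes sense to speak of the `s`-degrees of its entries. Let `V` be the set of such vectors whose
first entry attains the maximal degree, and `W` the set of those whose last entry has degree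
exactly one more than some bound for the degrees of all the others. They are disjoint.

For `k ≠ 0` the matrix `a(t)ᵏ = a(kt)` has entries in `K`, and its upper right entry
`(kt)ⁿ⁻¹/(n-1)!` is nonzero, so it copies the dominant last entry into the first one: it maps `W`
into `V`. The matrix `b(s)ᵏ = b(ks)` adds `ks` times the first entry to the last: it maps `V`
into `W`. Hence the two infinite cyclic groups generate their free product.
-/

open Matrix

/-- The `n × n` complex matrix `a(t) = exp(t x)` with `x = ∑_{i=1}^{n-1} E_{i,i+1}`:
its `(i,j)` entry is `t^{j-i}/(j-i)!` for `i ≤ j` and `0` otherwise. -/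
noncomputable def aMat (n : ℕ) (t : ℂ) : Matrix (Fin n) (Fin n) ℂ :=
  Matrix.of fun i j =>
    if (i : ℕ) ≤ (j : ℕ) then t ^ ((j : ℕ) - (i : ℕ)) / (((j : ℕ) - (i : ℕ)).factorial : ℂ)
    else 0

/-- The `n × n` complex matrix `b(s) = 1ₙ + s E_{n,1}` (in 0-based indexing the extra
entry `s` is in position `(n-1, 0)`). -/
def bMat (n : ℕ) (s : ℂ) : Matrix (Fin n) (Fin n) ℂ :=
  Matrix.of fun i j =>
    (if i = j then 1 else 0) + (if (i : ℕ) = n - 1 ∧ (j : ℕ) = 0 then s else 0)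

open Polynomial
open scoped Pointwise

/-- The binomial identity behind `a(t) a(u) = a(t + u)`. -/
lemma sum_pow_div_factorial (t u : ℂ) (d : ℕ) :
    ∑ p ∈ Finset.HasAntidiagonal.antidiagonal d, t ^ p.1 / (p.1.factorial : ℂ) * (u ^ p.2 / (p.2.factorial : ℂ)) =
      (t + u) ^ d / (d.factorial : ℂ) := by
  rw [(Commute.all t u).add_pow', Finset.sum_div]
  refine Finset.sum_congr rfl fun p hp => ?_
  obtain rfl := Finset.HasAntidiagonal.mem_antidiagonal.1 hp
  have h := Nat.add_choose_mul_factorial_mul_factorial p.1 p.2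
  rw [← Nat.choose_symm_add] at h
  have h' : ((p.1 + p.2).choose p.1 : ℂ) * p.1.factorial * p.2.factorial =
      (p.1 + p.2).factorial := by exact_mod_cast h
  have h1 : (p.1.factorial : ℂ) ≠ 0 := by exact_mod_cast p.1.factorial_ne_zero
  have h2 : (p.2.factorial : ℂ) ≠ 0 := by exact_mod_cast p.2.factorial_ne_zero
  have h3 : ((p.1 + p.2).factorial : ℂ) ≠ 0 := by exact_mod_cast (p.1 + p.2).factorial_ne_zero
  rw [nsmul_eq_mul]
  field_simp
  rw [← h']
  ring

lemma aMat_mul (n : ℕ) (t u : ℂ) : aMat n t * aMat n u = aMat n (t + u) := by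
  ext i k
  simp only [aMat, mul_apply, of_apply]
  by_cases hik : (i : ℕ) ≤ k
  · rw [if_pos hik, ← sum_pow_div_factorial]
    -- only the indices `i ≤ j ≤ k` contribute, and `j ↦ (j - i, k - j)` enumerates the antidiagonal
    symm
    refine Finset.sum_of_injOn
      (fun p : ℕ × ℕ => if h : (i : ℕ) + p.1 < n then ⟨i + p.1, h⟩ else i) ?_ ?_ ?_ ?_
    · rintro ⟨p, q⟩ hp ⟨p', q'⟩ hp' h
      rw [Finset.mem_coe, Finset.HasAntidiagonal.mem_antidiagonal] at hp hp'
      simp only at hp hp'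
      have := k.2
      simp only at h
      rw [dif_pos (by omega), dif_pos (by omega), Fin.mk.injEq] at h
      ext <;> simp <;> omega
    · intro _ _
      simp
    · intro j _ hj
      by_cases h1 : (i : ℕ) ≤ j
      · by_cases h2 : (j : ℕ) ≤ k
        · refine absurd ⟨((j : ℕ) - i, (k : ℕ) - j), ?_, ?_⟩ hj
          · rw [Finset.mem_coe, Finset.HasAntidiagonal.mem_antidiagonal]
            omega
          · have := j.2
            simp only
            rw [dif_pos (by omega)]
            ext
            simp only
            omega
        · simp [h2]
      · simp [h1]
    · rintro ⟨p, q⟩ hp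
      simp only [Finset.HasAntidiagonal.mem_antidiagonal] at hp
      have := k.2
      simp only
      rw [dif_pos (by omega)]
      simp only
      rw [if_pos (by omega), if_pos (by omega)]
      congr <;> omega
  · rw [if_neg hik]
    refine Finset.sum_eq_zero fun j _ => ?_
    by_cases h1 : (i : ℕ) ≤ j
    · rw [if_neg (show ¬ (j : ℕ) ≤ k by omega), mul_zero]
    · rw [if_neg h1, zero_mul]

lemma aMat_zero (n : ℕ) : aMat n 0 = 1 := by
  ext i j
  simp only [aMat, of_apply, one_apply]
  rcases lt_trichotomy (i : ℕ) j with h | h | h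
  · rw [if_pos h.le, if_neg (by rintro rfl; omega), zero_pow (by omega), zero_div]
  · obtain rfl := Fin.ext h
    simp
  · rw [if_neg (by omega), if_neg (by rintro rfl; omega)]

/-- The one-parameter group `t ↦ a(t)`. -/
noncomputable def aHom (n : ℕ) : Multiplicative ℂ →* GL (Fin n) ℂ :=
  MonoidHom.toHomUnits
    { toFun := fun t => aMat n t.toAdd
      map_one' := aMat_zero n
      map_mul' := fun t u => (aMat_mul n t.toAdd u.toAdd).symm }

lemma bMat_mulVec (m : ℕ) (s : ℂ) (v : Fin (m + 2) → ℂ) :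
    bMat (m + 2) s *ᵥ v = v + Pi.single (Fin.last (m + 1)) (s * v 0) := by
  ext i
  have h0 : ∀ j : Fin (m + 2), (j : ℕ) = 0 ↔ j = 0 := fun j => by rw [Fin.ext_iff]; rfl
  have hl : (i : ℕ) = m + 2 - 1 ↔ i = Fin.last (m + 1) := by rw [Fin.ext_iff]; rfl
  simp only [bMat, mulVec, dotProduct, of_apply, add_mul, Finset.sum_add_distrib, h0, hl,
    Pi.add_apply, Pi.single_apply]
  by_cases hi : i = Fin.last (m + 1) <;> simp [hi]

/-- The one-parameter group `s ↦ b(s)`. -/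
noncomputable def bHom (m : ℕ) : Multiplicative ℂ →* GL (Fin (m + 2)) ℂ :=
  MonoidHom.toHomUnits
    { toFun := fun s => bMat (m + 2) s.toAdd
      map_one' := by
        refine ext_of_mulVec_single fun i => ?_
        rw [toAdd_one, bMat_mulVec, one_mulVec, zero_mul, Pi.single_zero, add_zero]
      map_mul' := fun s u => by
        refine ext_of_mulVec_single fun i => ?_
        rw [← mulVec_mulVec, bMat_mulVec, bMat_mulVec, bMat_mulVec]
        rw [Pi.add_apply, Pi.single_eq_of_ne (Fin.last_pos.ne), add_zero, toAdd_mul]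
        ext j
        simp only [Pi.add_apply, Pi.single_apply]
        split_ifs <;> ring }

lemma aHom_zpow (n : ℕ) (t : ℂ) (k : ℤ) :
    ((aHom n (.ofAdd t) ^ k : GL (Fin n) ℂ) : Matrix (Fin n) (Fin n) ℂ) = aMat n (k * t) := by
  rw [← map_zpow, ← ofAdd_zsmul, zsmul_eq_mul]
  rfl

lemma bHom_zpow (m : ℕ) (s : ℂ) (k : ℤ) :
    ((bHom m (.ofAdd s) ^ k : GL (Fin (m + 2)) ℂ) : Matrix (Fin (m + 2)) (Fin (m + 2)) ℂ) =
      bMat (m + 2) (k * s) := by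
  rw [← map_zpow, ← ofAdd_zsmul, zsmul_eq_mul]
  rfl

/-- The standard action of `GL` on column vectors. -/
@[reducible] def glAction (n : ℕ) : MulAction (GL (Fin n) ℂ) (Fin n → ℂ) where
  smul g v := (g : Matrix (Fin n) (Fin n) ℂ) *ᵥ v
  one_smul v := one_mulVec v
  mul_smul g h v := (mulVec_mulVec v (g : Matrix (Fin n) (Fin n) ℂ) h).symm

/-- Vectors with entries in `K[s]` whose first entry has the maximal degree in `s`. -/
def firstDominant (K : Subalgebra ℚ ℂ) (s : ℂ) (m : ℕ) : Set (Fin (m + 2) → ℂ) :=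
  {v | ∃ (p : Fin (m + 2) → K[X]) (d : ℕ), (∀ i, v i = aeval s (p i)) ∧
    (∀ i, (p i).natDegree ≤ d) ∧ (p 0).coeff d ≠ 0}

/-- Vectors with entries in `K[s]` whose last entry has degree `d + 1` in `s`, while all other
entries have degree at most `d`. -/
def lastDominant (K : Subalgebra ℚ ℂ) (s : ℂ) (m : ℕ) : Set (Fin (m + 2) → ℂ) :=
  {v | ∃ (p : Fin (m + 2) → K[X]) (d : ℕ), (∀ i, v i = aeval s (p i)) ∧
    (∀ i, i ≠ Fin.last (m + 1) → (p i).natDegree ≤ d) ∧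
    (p (Fin.last (m + 1))).natDegree ≤ d + 1 ∧ (p (Fin.last (m + 1))).coeff (d + 1) ≠ 0}

lemma disjoint_dominant {K : Subalgebra ℚ ℂ} {s : ℂ} (hs : Transcendental K s) (m : ℕ) :
    Disjoint (firstDominant K s m) (lastDominant K s m) := by
  rw [Set.disjoint_left]
  rintro v ⟨p, d, hv, hd, hne⟩ ⟨q, e, hv', he, -, hne'⟩
  have hpq : p = q := funext fun i =>
    transcendental_iff_injective.1 hs ((hv i).symm.trans (hv' i))
  subst hpq
  have h1 : e + 1 ≤ d := (le_natDegree_of_ne_zero hne').trans (hd _)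
  have h2 : d ≤ e := (le_natDegree_of_ne_zero hne).trans
    (he 0 (by simp [Fin.ext_iff]))
  omega

lemma aMat_mem {K : Subalgebra ℚ ℂ} {t : ℂ} (ht : t ∈ K) (n : ℕ) (i j : Fin n) :
    aMat n t i j ∈ K := by
  simp only [aMat, of_apply]
  split_ifs
  · have : t ^ ((j : ℕ) - i) / (((j : ℕ) - i).factorial : ℂ) =
        ((((j : ℕ) - i).factorial : ℚ)⁻¹) • t ^ ((j : ℕ) - i) := by
      rw [Rat.smul_def, div_eq_inv_mul]
      push_cast
      rfl
    rw [this]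
    exact K.smul_mem (K.pow_mem ht _) _
  · exact K.zero_mem

lemma aMat_mulVec_mem {K : Subalgebra ℚ ℂ} {s t : ℂ} (ht : t ∈ K) (ht0 : t ≠ 0) {m : ℕ}
    {v : Fin (m + 2) → ℂ} (hv : v ∈ lastDominant K s m) :
    aMat (m + 2) t *ᵥ v ∈ firstDominant K s m := by
  obtain ⟨p, d, hp, hd, hl, hne⟩ := hv
  let α : Fin (m + 2) → Fin (m + 2) → K := fun i j => ⟨aMat (m + 2) t i j, aMat_mem ht _ i j⟩
  refine ⟨fun i => ∑ j, C (α i j) * p j, d + 1, fun i => ?_, fun i => ?_, ?_⟩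
  · simp only [mulVec, dotProduct, map_sum, map_mul, aeval_C, hp]
    rfl
  · refine natDegree_sum_le_of_forall_le _ _ fun j _ => (natDegree_C_mul_le _ _).trans ?_
    by_cases hj : j = Fin.last (m + 1)
    · exact hj ▸ hl
    · exact (hd j hj).trans d.le_succ
  · rw [finsetSum_coeff, Finset.sum_eq_single (Fin.last (m + 1)), coeff_C_mul]
    · refine mul_ne_zero (fun h => ?_) hne
      have h' : aMat (m + 2) t 0 (Fin.last (m + 1)) = 0 := congrArg Subtype.val h
      simp [aMat, ht0, Nat.factorial_ne_zero] at h'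
    · intro j _ hj
      rw [coeff_C_mul, coeff_eq_zero_of_natDegree_lt (Nat.lt_succ_of_le (hd j hj)), mul_zero]
    · simp

lemma bMat_mulVec_mem {K : Subalgebra ℚ ℂ} {s : ℂ} {k : ℤ} (hk : k ≠ 0) {m : ℕ}
    {v : Fin (m + 2) → ℂ} (hv : v ∈ firstDominant K s m) :
    bMat (m + 2) (k * s) *ᵥ v ∈ lastDominant K s m := by
  obtain ⟨p, d, hp, hd, hne⟩ := hv
  refine ⟨p + Pi.single (Fin.last (m + 1)) (C (k : K) * p 0 * X), d, fun i => ?_, fun i hi => ?_,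
    ?_, ?_⟩
  · rw [bMat_mulVec]
    by_cases hi : i = Fin.last (m + 1)
    · subst hi
      simp [hp]
      ring
    · simp [hi, hp]
  · simpa [hi] using hd i
  · simp only [Pi.add_apply, Pi.single_eq_same]
    refine natDegree_add_le_of_degree_le ((hd _).trans d.le_succ) ?_
    refine natDegree_mul_le_of_le ((natDegree_C_mul_le _ _).trans (hd 0)) natDegree_X_le
  · simp only [Pi.add_apply, Pi.single_eq_same, coeff_add, coeff_mul_X, coeff_C_mul]
    rw [coeff_eq_zero_of_natDegree_lt (Nat.lt_succ_of_le (hd _)), zero_add]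
    exact mul_ne_zero (Int.cast_ne_zero.2 hk) hne

/-- Ping-pong for two infinite cyclic groups, one ping-pong set for each: unlike in
`FreeGroup.injective_lift_of_ping_pong`, no set needs to be split into an attracting and a
repelling part, so unipotent elements are allowed. -/
lemma injective_lift_of_zpow_ping_pong {G α : Type} [Group G] [MulAction G α] (a : Bool → G)
    (S : Bool → Set α) (hne : ∀ i, (S i).Nonempty) (hdisj : Disjoint (S true) (S false))
    (hpp : ∀ i, ∀ k : ℤ, k ≠ 0 → ∀ v ∈ S (!i), a i ^ k • v ∈ S i) :
    Function.Injective (FreeGroup.lift a) := by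
  have hfac : FreeGroup.lift a =
      (Monoid.CoprodI.lift fun i => FreeGroup.lift fun _ : Unit => a i).comp
        (freeGroupEquivCoprodI (ι := Bool)).toMonoidHom := by
    ext i
    simp
  rw [hfac, MonoidHom.coe_comp]
  refine Function.Injective.comp ?_ (MulEquiv.injective freeGroupEquivCoprodI)
  refine Monoid.CoprodI.lift_injective_of_ping_pong (H := fun _ : Bool => FreeGroup Unit)
    (fun i => FreeGroup.lift fun _ : Unit => a i) (.inr ⟨true, ?_⟩) S hne ?_ ?_
  · have : Infinite (FreeGroup Unit) := FreeGroup.freeGroupUnitEquivInt.infinite_iff.2 inferInstance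
    exact (Cardinal.natCast_lt_aleph0 (n := 3)).le.trans (Cardinal.infinite_iff.1 this)
  · rintro (_ | _) (_ | _) h
    · exact absurd rfl h
    · exact hdisj.symm
    · exact hdisj
    · exact absurd rfl h
  · intro i j hij
    obtain rfl : j = !i := by cases i <;> cases j <;> simp_all
    refine FreeGroup.freeGroupUnitEquivInt.forall_congr_left.mpr fun k hk => ?_
    have hk0 : k ≠ 0 := by
      rintro rfl
      exact hk (by simp [FreeGroup.freeGroupUnitEquivInt])
    change FreeGroup.lift (fun _ => a i) (FreeGroup.of () ^ k) • S (!i) ⊆ S i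
    rw [map_zpow, FreeGroup.lift_apply_of]
    rintro _ ⟨v, hv, rfl⟩
    exact hpp i k hk0 v hv

/-- for `n ≥ 2` and `t, s ∈ ℂ` algebraically independent over `ℚ`, the
matrices `a(t)` and `b(s)` are invertible and generate a free subgroup of rank 2 of
`GL(n, ℂ)`: the homomorphism from the free group on two generators sending one generator
to `a(t)` and the other to `b(s)` is injective. -/
theorem stmt18 (n : ℕ) (hn : 2 ≤ n) (t s : ℂ)
    (hts : AlgebraicIndependent ℚ ![t, s]) :
    ∃ A B : GL (Fin n) ℂ, (A : Matrix (Fin n) (Fin n) ℂ) = aMat n t ∧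
      (B : Matrix (Fin n) (Fin n) ℂ) = bMat n s ∧
      Function.Injective
        ⇑(FreeGroup.lift (fun g : Bool => if g then A else B) :
          FreeGroup Bool →* GL (Fin n) ℂ) := by
  obtain ⟨m, rfl⟩ : ∃ m, n = m + 2 := ⟨n - 2, by omega⟩
  let K : Subalgebra ℚ ℂ := Algebra.adjoin ℚ (![t, s] '' {0})
  have htK : t ∈ K := Algebra.subset_adjoin ⟨0, rfl, rfl⟩
  have hs : Transcendental K s := hts.transcendental_adjoin (s := {0}) (i := 1) (by simp)
  have ht0 : t ≠ 0 := hts.ne_zero 0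
  refine ⟨aHom (m + 2) (.ofAdd t), bHom m (.ofAdd s), rfl, rfl, ?_⟩
  let _ := glAction (m + 2)
  refine injective_lift_of_zpow_ping_pong _
    (fun i => if i then firstDominant K s m else lastDominant K s m) ?_ ?_ ?_
  · have h : (fun _ => 1 : Fin (m + 2) → ℂ) ∈ firstDominant K s m :=
      ⟨fun _ => 1, 0, by simp, by simp, by simp⟩
    rintro (_ | _)
    · exact ⟨_, bMat_mulVec_mem one_ne_zero h⟩
    · exact ⟨_, h⟩
  · exact disjoint_dominant hs m
  · rintro (_ | _) k hk v hv
    · change ((bHom m (.ofAdd s) ^ k : GL (Fin (m + 2)) ℂ) : Matrix _ _ ℂ) *ᵥ v ∈ lastDominant K s m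
      rw [bHom_zpow]
      exact bMat_mulVec_mem hk hv
    · change ((aHom (m + 2) (.ofAdd t) ^ k : GL (Fin (m + 2)) ℂ) : Matrix _ _ ℂ) *ᵥ v ∈
        firstDominant K s m
      rw [aHom_zpow]
      exact aMat_mulVec_mem (K.mul_mem (K.intCast_mem k) htK)
        (mul_ne_zero (Int.cast_ne_zero.2 hk) ht0) hv
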